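/- Odd reflection boundary estimate: Let B be a ball centered on the hyperplane {x_n = 0}, B⁺ = B ∩ {x_n > 0}, and let v ∈ H²(B⁺)∩H_0¹(B⁺) with Δv ∈ H_0¹(B⁺) vanish (with ∇v and Δv) near the curved part of ∂B⁺. Let A_0 be constant, symmetric, positive definite with smallest eigenvalue ≥ λ. Then √ε‖∇Δv‖_{L²(B⁺)} + √λ‖D²v‖_{L²(B⁺)} ≤ C‖L_0^ε v‖_{L²(B⁺)}, with C independent of ε. -/

import Mathlib

open MeasureTheory Real Filter Bornology
open scoped InnerProductSpace

noncomputable section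

/-- Euclidean space `ℝⁿ`. -/
abbrev Euc (n : ℕ) := EuclideanSpace ℝ (Fin n)

variable {n : ℕ}

/-- First partial derivative `v_{x_i}`. -/
def pd (i : Fin n) (v : Euc n → ℝ) (x : Euc n) : ℝ :=
  fderiv ℝ v x (EuclideanSpace.single i 1)

/-- Second partial derivative `v_{x_i x_j}`. -/
def pd2 (i j : Fin n) (v : Euc n → ℝ) (x : Euc n) : ℝ := pd i (pd j v) x

/-- Laplacian `Δv`. -/
def lap (v : Euc n → ℝ) (x : Euc n) : ℝ := ∑ i, pd2 i i v x

/-- Squared `L²(s)` norm. -/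
def L2sq (s : Set (Euc n)) (g : Euc n → ℝ) : ℝ := ∫ x in s, (g x) ^ 2

/-- `L²(s)` norm. -/
def L2norm (s : Set (Euc n)) (g : Euc n → ℝ) : ℝ := Real.sqrt (L2sq s g)

/-- Squared `L²(s)` norm of the gradient, `‖∇v‖²_{L²(s)}`. -/
def gradL2sq (s : Set (Euc n)) (v : Euc n → ℝ) : ℝ := ∑ i, L2sq s (pd i v)

/-- Squared `L²(s)` norm of the Hessian, `‖D²v‖²_{L²(s)}`. -/
def hessL2sq (s : Set (Euc n)) (v : Euc n → ℝ) : ℝ := ∑ i, ∑ j, L2sq s (pd2 i j v)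

/-- The `H²(s)` norm. -/
def H2N (s : Set (Euc n)) (v : Euc n → ℝ) : ℝ :=
  Real.sqrt (L2sq s v + gradL2sq s v + hessL2sq s v)

/-- The `H^{-1}(s)` norm: sup of pairings against smooth compactly supported test
functions in `s`, normalized by the gradient `L²` norm. -/
def Hneg1 (s : Set (Euc n)) (g : Euc n → ℝ) : ℝ :=
  sSup {t | ∃ φ : Euc n → ℝ, ContDiff ℝ (⊤ : ℕ∞) φ ∧ HasCompactSupport φ ∧
    tsupport φ ⊆ s ∧ φ ≠ 0 ∧ t = (∫ x in s, g x * φ x) / Real.sqrt (gradL2sq s φ)}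

/-- `∂Ω ∈ C^k`: local C^k defining functions. -/
def BoundaryCk (k : ℕ) (Ω : Set (Euc n)) : Prop :=
  ∀ x ∈ frontier Ω, ∃ (U : Set (Euc n)) (g : Euc n → ℝ), IsOpen U ∧ x ∈ U ∧
    ContDiff ℝ k g ∧ (∀ y ∈ U, (y ∈ Ω ↔ g y < 0)) ∧
    ∀ y ∈ U, y ∈ frontier Ω → fderiv ℝ g y ≠ 0

/-- `∂Ω ∈ C^{2,1}`: local C² defining functions with Lipschitz second derivatives. -/
def BoundaryC21 (Ω : Set (Euc n)) : Prop :=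
  ∀ x ∈ frontier Ω, ∃ (U : Set (Euc n)) (g : Euc n → ℝ) (M : NNReal), IsOpen U ∧ x ∈ U ∧
    ContDiff ℝ 2 g ∧ LipschitzWith M (iteratedFDeriv ℝ 2 g) ∧
    (∀ y ∈ U, (y ∈ Ω ↔ g y < 0)) ∧
    ∀ y ∈ U, y ∈ frontier Ω → fderiv ℝ g y ≠ 0

/-- The pairing `(L_h^ε v, w) = ε(Δv, Δw) − (A:D²v, w)` over `Ω`. -/
def pairLh (Ω : Set (Euc n)) (A : Euc n → Matrix (Fin n) (Fin n) ℝ) (ε : ℝ)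
    (v w : Euc n → ℝ) : ℝ :=
  ε * (∫ x in Ω, lap v x * lap w x) -
    ∫ x in Ω, (∑ i, ∑ j, A x i j * pd2 i j v x) * w x

/-- The discrete dual norm `‖L_h^ε v‖_{L_h²(Ω)}`. -/
def Lh2N (Ω : Set (Euc n)) (A : Euc n → Matrix (Fin n) (Fin n) ℝ) (ε : ℝ)
    (Vh : Submodule ℝ (Euc n → ℝ)) (v : Euc n → ℝ) : ℝ :=
  sSup {t | ∃ w, w ∈ Vh ∧ w ≠ 0 ∧ t = pairLh Ω A ε v w / L2norm Ω w}


def HS (k : Fin n) : Set (Euc n) := {x : Euc n | 0 < x k}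

structure Gd (k : Fin n) (c : Euc n) (r' : ℝ) (f : Euc n → ℝ) : Prop where
  smooth : ContDiff ℝ (⊤ : ℕ∞) f
  van : ∀ x : Euc n, 0 ≤ x k → x ∉ Metric.closedBall c r' → f x = 0

def Zb (k : Fin n) (f : Euc n → ℝ) : Prop := ∀ x : Euc n, x k = 0 → f x = 0

lemma contDiff_pd {f : Euc n → ℝ} (hf : ContDiff ℝ (⊤ : ℕ∞) f) (i : Fin n) :
    ContDiff ℝ (⊤ : ℕ∞) (pd i f) := by
  unfold pd
  exact (hf.fderiv_right (m := (⊤ : ℕ∞)) (by simp)).clm_apply contDiff_const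

lemma diff_of_smooth {f : Euc n → ℝ} (hf : ContDiff ℝ (⊤ : ℕ∞) f) : Differentiable ℝ f :=
  hf.differentiable (by simp)

lemma isOpen_HS (k : Fin n) : IsOpen (HS k) := by
  unfold HS
  exact isOpen_lt continuous_const (by fun_prop)

lemma Gd.pd {k : Fin n} {c : Euc n} {r' : ℝ} {f : Euc n → ℝ} (h : Gd k c r' f) (i : Fin n) :
    Gd k c r' (pd i f) := by
  refine ⟨contDiff_pd h.smooth i, ?_⟩
  have key : ∀ x : Euc n, 0 < x k → x ∉ Metric.closedBall c r' → _root_.pd i f x = 0 := by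
    intro x hx hxb
    have hev : f =ᶠ[nhds x] fun _ => 0 := by
      filter_upwards [(isOpen_HS k).mem_nhds hx,
        (Metric.isClosed_closedBall (x := c) (ε := r')).isOpen_compl.mem_nhds hxb] with y hy hyb
      exact h.van y (le_of_lt hy) hyb
    unfold _root_.pd
    rw [hev.fderiv_eq]
    simp
  intro x hx hxb
  have hcont : Continuous (fun t : ℝ => x + t • (EuclideanSpace.single k 1 : Euc n)) := by fun_prop
  have h1 : Tendsto (fun t : ℝ => _root_.pd i f (x + t • (EuclideanSpace.single k 1 : Euc n)))
      (nhdsWithin 0 (Set.Ioi 0)) (nhds (_root_.pd i f x)) := by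
    have := ((contDiff_pd h.smooth i).continuous.comp hcont).tendsto 0
    simp only [Function.comp_def, zero_smul, add_zero] at this
    exact this.mono_left nhdsWithin_le_nhds
  have h2 : ∀ᶠ t : ℝ in nhdsWithin 0 (Set.Ioi 0),
      _root_.pd i f (x + t • (EuclideanSpace.single k 1 : Euc n)) = 0 := by
    have h3 : ∀ᶠ t : ℝ in nhds 0,
        x + t • (EuclideanSpace.single k 1 : Euc n) ∈ (Metric.closedBall c r')ᶜ := by
      apply hcont.continuousAt.eventually_mem
      apply (Metric.isClosed_closedBall (x := c) (ε := r')).isOpen_compl.mem_nhds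
      simpa using hxb
    filter_upwards [h3.filter_mono nhdsWithin_le_nhds, self_mem_nhdsWithin] with t ht ht0
    apply key _ _ ht
    have : (0 : ℝ) < t := ht0
    simp
    linarith
  exact tendsto_nhds_unique h1 (tendsto_const_nhds.congr' (h2.mono fun t ht => ht.symm))

lemma Gd.mul {k : Fin n} {c : Euc n} {r' : ℝ} {f g : Euc n → ℝ} (hf : Gd k c r' f)
    (hg : Gd k c r' g) : Gd k c r' (fun x => f x * g x) :=
  ⟨hf.smooth.mul hg.smooth, fun x hx hb => by simp [hf.van x hx hb]⟩

lemma Gd.add {k : Fin n} {c : Euc n} {r' : ℝ} {f g : Euc n → ℝ} (hf : Gd k c r' f)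
    (hg : Gd k c r' g) : Gd k c r' (fun x => f x + g x) :=
  ⟨hf.smooth.add hg.smooth, fun x hx hb => by simp [hf.van x hx hb, hg.van x hx hb]⟩

lemma Gd.sub {k : Fin n} {c : Euc n} {r' : ℝ} {f g : Euc n → ℝ} (hf : Gd k c r' f)
    (hg : Gd k c r' g) : Gd k c r' (fun x => f x - g x) :=
  ⟨hf.smooth.sub hg.smooth, fun x hx hb => by simp [hf.van x hx hb, hg.van x hx hb]⟩

lemma Gd.const_mul {k : Fin n} {c : Euc n} {r' : ℝ} {f : Euc n → ℝ} (hf : Gd k c r' f)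
    (a : ℝ) : Gd k c r' (fun x => a * f x) :=
  ⟨contDiff_const.mul hf.smooth, fun x hx hb => by simp [hf.van x hx hb]⟩

lemma Gd.sum {k : Fin n} {c : Euc n} {r' : ℝ} {f : Fin n → Euc n → ℝ}
    (hf : ∀ i, Gd k c r' (f i)) : Gd k c r' (fun x => ∑ i, f i x) :=
  ⟨ContDiff.sum fun i _ => (hf i).smooth,
    fun x hx hb => Finset.sum_eq_zero fun i _ => (hf i).van x hx hb⟩

lemma Gd.pd2 {k : Fin n} {c : Euc n} {r' : ℝ} {f : Euc n → ℝ} (h : Gd k c r' f) (i j : Fin n) :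
    Gd k c r' (pd2 i j f) := (h.pd j).pd i

lemma Gd.lap {k : Fin n} {c : Euc n} {r' : ℝ} {f : Euc n → ℝ} (h : Gd k c r' f) :
    Gd k c r' (lap f) := Gd.sum fun i => h.pd2 i i

lemma Gd.integrableOn {k : Fin n} {c : Euc n} {r' : ℝ} {f : Euc n → ℝ} (h : Gd k c r' f) :
    IntegrableOn f (HS k) := by
  have h1 : IntegrableOn f (Metric.closedBall c r' ∩ HS k) :=
    (h.smooth.continuous.continuousOn.integrableOn_compact
      (isCompact_closedBall c r')).mono_set Set.inter_subset_left
  refine h1.of_forall_sdiff_eq_zero (isOpen_HS k).measurableSet ?_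
  intro x hx
  exact h.van x (le_of_lt hx.1) fun hb => hx.2 ⟨hb, hx.1⟩

lemma Gd.L2sq_eq {k : Fin n} {c : Euc n} {r r' : ℝ} (hr : r' < r) {f : Euc n → ℝ}
    (h : Gd k c r' f) :
    L2sq (Metric.ball c r ∩ {x : Euc n | 0 < x k}) f = ∫ x in HS k, f x * f x := by
  unfold L2sq
  rw [setIntegral_eq_of_subset_of_forall_sdiff_eq_zero (isOpen_HS k).measurableSet
    (Set.inter_subset_right : Metric.ball c r ∩ {x : Euc n | 0 < x k} ⊆ HS k)]
  · simp only [pow_two]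
  · intro x hx
    have : f x = 0 := by
      apply h.van x (le_of_lt hx.1)
      intro hb
      apply hx.2
      exact ⟨Metric.closedBall_subset_ball hr hb, hx.1⟩
    simp [this]

lemma Zb.pd {k : Fin n} {f : Euc n → ℝ} (hf : Differentiable ℝ f) (h : Zb k f) {i : Fin n}
    (hi : i ≠ k) : Zb k (pd i f) := by
  intro x hx
  unfold _root_.pd
  rw [← (hf x).lineDeriv_eq_fderiv]
  unfold lineDeriv
  have : (fun t : ℝ => f (x + t • (EuclideanSpace.single i 1 : Euc n))) = fun _ => 0 := by
    funext t
    apply h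
    simp [hx, hi.symm]
  rw [this]
  simp

lemma pd_comm {f : Euc n → ℝ} (hf : ContDiff ℝ (⊤ : ℕ∞) f) (i j : Fin n) (x : Euc n) :
    pd i (pd j f) x = pd j (pd i f) x := by
  have hs : IsSymmSndFDerivAt ℝ f x := by
    refine hf.contDiffAt.isSymmSndFDerivAt ?_
    rw [minSmoothness_of_isRCLikeNormedField]
    exact WithTop.coe_le_coe.2 (le_top : (2 : ℕ∞) ≤ ⊤)
  have hd : DifferentiableAt ℝ (fderiv ℝ f) x :=
    (hf.fderiv_right (m := (⊤ : ℕ∞)) (by simp)).differentiable (by simp) x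
  have e : ∀ a b : Fin n, pd a (pd b f) x =
      fderiv ℝ (fderiv ℝ f) x (EuclideanSpace.single a 1) (EuclideanSpace.single b 1) := by
    intro a b
    have : HasFDerivAt (pd b f)
        ((fderiv ℝ (fderiv ℝ f) x).flip (EuclideanSpace.single b 1)) x := by
      unfold pd
      have := hd.hasFDerivAt.clm_apply (hasFDerivAt_const (EuclideanSpace.single b 1 : Euc n) x)
      have e : (fderiv ℝ f x).comp (0 : Euc n →L[ℝ] Euc n) +
          (fderiv ℝ (fderiv ℝ f) x).flip (EuclideanSpace.single b 1) =
          (fderiv ℝ (fderiv ℝ f) x).flip (EuclideanSpace.single b 1) := by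
        ext; simp
      rw [← e]
      exact this
    show fderiv ℝ (pd b f) x _ = _
    rw [this.fderiv]
    simp
  rw [e, e]
  exact hs _ _

lemma pd_mul {f g : Euc n → ℝ} (hf : Differentiable ℝ f) (hg : Differentiable ℝ g) (i : Fin n)
    (x : Euc n) : pd i (fun y => f y * g y) x = f x * pd i g x + pd i f x * g x := by
  unfold pd
  have := ((hf x).hasFDerivAt.mul (hg x).hasFDerivAt).fderiv
  rw [show (fun y => f y * g y) = f * g from rfl, this]
  simp [mul_comm]

lemma ibp_tan {k : Fin n} {c : Euc n} {r' : ℝ} {f : Euc n → ℝ} (h : Gd k c r' f) {i : Fin n}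
    (hi : i ≠ k) : ∫ x in HS k, pd i f x = 0 := by
  rw [← integral_indicator (isOpen_HS k).measurableSet]
  have hm := (isOpen_HS k).measurableSet
  have := integral_bilinear_hasLineDerivAt_right_eq_neg_left_of_integrable (μ := volume)
    (f := fun _ : Euc n => (1 : ℝ)) (f' := fun _ => 0) (g := (HS k).indicator f)
    (g' := (HS k).indicator (pd i f)) (v := EuclideanSpace.single i 1)
    (B := ContinuousLinearMap.mul ℝ ℝ) (by simp)
    (by simpa using (integrable_indicator_iff hm).2 (h.pd i).integrableOn)
    (by simpa using (integrable_indicator_iff hm).2 h.integrableOn)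
    (fun x _ => by simpa [HasLineDerivAt] using hasDerivAt_const (0 : ℝ) (1 : ℝ)) ?_
  · simpa using this
  · intro x _
    have hmem : ∀ t : ℝ, (x + t • (EuclideanSpace.single i 1 : Euc n) ∈ HS k ↔ x ∈ HS k) := by
      intro t; simp [HS, hi.symm]
    unfold HasLineDerivAt
    by_cases hx : x ∈ HS k
    · have e : (fun t : ℝ => (HS k).indicator f (x + t • (EuclideanSpace.single i 1 : Euc n))) =
          fun t => f (x + t • (EuclideanSpace.single i 1 : Euc n)) := by
        funext t; rw [Set.indicator_of_mem ((hmem t).2 hx)]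
      rw [e, Set.indicator_of_mem hx]
      exact ((diff_of_smooth h.smooth) x).hasFDerivAt.hasLineDerivAt _
    · have e : (fun t : ℝ => (HS k).indicator f (x + t • (EuclideanSpace.single i 1 : Euc n))) =
          fun t => 0 := by
        funext t; rw [Set.indicator_of_notMem (fun hh => hx ((hmem t).1 hh))]
      rw [e, Set.indicator_of_notMem hx]
      exact hasDerivAt_const _ _

def PK (k : Fin n) (x : Euc n) : Euc n := WithLp.toLp 2 (Function.update x k (max (x k) 0))

lemma PK_of_nonneg {k : Fin n} {x : Euc n} (hx : 0 ≤ x k) : PK k x = x := by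
  unfold PK
  ext i
  by_cases hi : i = k
  · subst hi; simp [hx]
  · simp [hi]

lemma PK_k (k : Fin n) (x : Euc n) : PK k x k = max (x k) 0 := by simp [PK]

lemma PK_lip (k : Fin n) : LipschitzWith 1 (PK k) := by
  refine LipschitzWith.of_dist_le_mul fun x y => ?_
  simp only [NNReal.coe_one, one_mul]
  rw [EuclideanSpace.dist_eq, EuclideanSpace.dist_eq]
  apply Real.sqrt_le_sqrt
  apply Finset.sum_le_sum
  intro i _
  by_cases hi : i = k
  · subst hi
    have : |max (x i) 0 - max (y i) 0| ≤ |x i - y i| := abs_max_sub_max_le_abs _ _ _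
    simp only [PK, Real.dist_eq, Function.update_self]
    gcongr
  · simp [PK, hi]

lemma vol_bdry (k : Fin n) : ∀ᵐ x : Euc n, x k ≠ 0 := by
  have h := Measure.addHaar_submodule (volume : Measure (Euc n))
    (LinearMap.ker ((EuclideanSpace.proj k : Euc n →L[ℝ] ℝ) : Euc n →ₗ[ℝ] ℝ)) (by
      intro h
      have : (EuclideanSpace.single k 1 : Euc n) ∈ (⊤ : Submodule ℝ (Euc n)) := trivial
      rw [← h] at this
      simp at this)
  rw [ae_iff]
  convert h using 2
  ext x
  simp

lemma ibp_nor {k : Fin n} {c : Euc n} {r' : ℝ} {f : Euc n → ℝ} (h : Gd k c r' f)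
    (hz : Zb k f) (i : Fin n) : ∫ x in HS k, pd i f x = 0 := by
  set g : Euc n → ℝ := fun x => f (PK k x) with hg
  have hgpos : ∀ x : Euc n, 0 < x k → g x = f x := fun x hx => by
    simp only [hg, PK_of_nonneg hx.le]
  have hgneg : ∀ x : Euc n, x k ≤ 0 → g x = 0 := fun x hx => by
    apply hz; rw [PK_k]; simp [hx]
  have hd := diff_of_smooth h.smooth
  obtain ⟨C, hC⟩ : ∃ C : NNReal, ∀ x : Euc n, 0 ≤ x k → ‖fderiv ℝ f x‖₊ ≤ C := by
    have hcont : Continuous (fun x => ‖fderiv ℝ f x‖₊) :=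
      (h.smooth.continuous_fderiv (by simp)).nnnorm
    obtain ⟨C, hC⟩ := (isCompact_closedBall c r').bddAbove_image hcont.continuousOn
    refine ⟨C, fun x hx => ?_⟩
    by_cases hb : x ∈ Metric.closedBall c r'
    · exact hC ⟨x, hb, rfl⟩
    · have : fderiv ℝ f x = 0 := by
        ext1 y
        have hy : y = ∑ j, y j • (EuclideanSpace.single j 1 : Euc n) := by
          ext l; simp [Finset.sum_apply, Pi.single_apply]
        rw [hy, map_sum]
        apply Finset.sum_eq_zero
        intro j _
        rw [map_smul]
        have := (h.pd j).van x hx hb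
        unfold pd at this
        rw [this]; simp
      rw [this]; simp
  have hconv : Convex ℝ {x : Euc n | 0 ≤ x k} := by
    intro x hx y hy a b ha hb _
    simp only [Set.mem_ofPred_eq] at *
    simp
    positivity
  have hlip : LipschitzOnWith C f {x : Euc n | 0 ≤ x k} :=
    hconv.lipschitzOnWith_of_nnnorm_fderiv_le (fun x _ => hd x) hC
  have hgl : LipschitzWith (C * 1) g := by
    rw [← lipschitzOnWith_univ]
    refine hlip.comp ((PK_lip k).lipschitzOnWith) ?_
    intro x _
    simp [PK_k]
  have hcs : HasCompactSupport g := by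
    refine HasCompactSupport.of_support_subset_isCompact (isCompact_closedBall c r') ?_
    intro x hx
    by_contra hb
    apply hx
    rcases lt_or_ge 0 (x k) with h0 | h0
    · rw [hgpos x h0]; exact h.van x h0.le hb
    · exact hgneg x h0
  have key := LipschitzWith.integral_lineDeriv_mul_eq (μ := volume)
    (LipschitzWith.const (1 : ℝ) : LipschitzWith 0 fun _ : Euc n => (1 : ℝ)) hgl hcs
    (-(EuclideanSpace.single i 1 : Euc n))
  rw [← integral_indicator (isOpen_HS k).measurableSet]
  have e : ∫ x, (HS k).indicator (pd i f) x =
      ∫ x, lineDeriv ℝ g x (EuclideanSpace.single i 1) := by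
    apply integral_congr_ae
    filter_upwards [vol_bdry k] with x hx
    rcases lt_or_gt_of_ne hx with h0 | h0
    · rw [Set.indicator_of_notMem (by simp [HS, h0.le])]
      have hev : g =ᶠ[nhds x] fun _ => 0 := by
        have : IsOpen {y : Euc n | y k < 0} := isOpen_lt (by fun_prop) continuous_const
        filter_upwards [this.mem_nhds h0] with y hy
        exact hgneg y (le_of_lt hy)
      rw [hev.lineDeriv_eq]
      simp [lineDeriv]
    · rw [Set.indicator_of_mem (show x ∈ HS k from h0)]
      have hev : g =ᶠ[nhds x] f := by
        filter_upwards [(isOpen_HS k).mem_nhds h0] with y hy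
        exact hgpos y hy
      rw [hev.lineDeriv_eq, (hd x).lineDeriv_eq_fderiv]
      rfl
  rw [e]
  have z : ∀ x w : Euc n, lineDeriv ℝ (fun _ : Euc n => (1 : ℝ)) x w = 0 := by
    intro x w; simp [lineDeriv]
  simp only [z, zero_mul, integral_zero, neg_neg, mul_one] at key
  exact key.symm

lemma ibp_prod {k : Fin n} {c : Euc n} {r' : ℝ} {f g : Euc n → ℝ} (hf : Gd k c r' f)
    (hg : Gd k c r' g) (i : Fin n) (hb : i ≠ k ∨ Zb k (fun x => f x * g x)) :
    ∫ x in HS k, f x * pd i g x = - ∫ x in HS k, pd i f x * g x := by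
  have h0 : ∫ x in HS k, pd i (fun y => f y * g y) x = 0 := by
    rcases hb with hi | hz
    · exact ibp_tan (hf.mul hg) hi
    · exact ibp_nor (hf.mul hg) hz i
  simp only [pd_mul (diff_of_smooth hf.smooth) (diff_of_smooth hg.smooth)] at h0
  rw [integral_add (hf.mul (hg.pd i)).integrableOn ((hf.pd i).mul hg).integrableOn] at h0
  linarith

lemma hess_id {k : Fin n} {c : Euc n} {r' : ℝ} {v : Euc n → ℝ} (hv : Gd k c r' v)
    (hz : Zb k v) (i j l : Fin n) :
    ∫ x in HS k, pd2 i j v x * pd2 l l v x = ∫ x in HS k, pd2 i l v x * pd2 j l v x := by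
  have hd := diff_of_smooth hv.smooth
  have comm : ∀ a b, pd2 a b v = pd2 b a v := fun a b => funext (pd_comm hv.smooth a b)
  by_cases h1 : i = l
  · subst h1
    simp only [comm i j, mul_comm]
  by_cases h2 : j = l
  · subst h2; rfl
  have b1 : l ≠ k ∨ Zb k (fun x => pd2 i j v x * pd l v x) := by
    by_cases hl : l = k
    · right
      intro x hx
      subst hl
      have := Zb.pd (diff_of_smooth (hv.pd j).smooth) (Zb.pd hd hz h2) h1 x hx
      simp only [pd2, this, zero_mul]
    · exact Or.inl hl
  have b2 : i ≠ k ∨ Zb k (fun x => pd2 j l v x * pd l v x) := by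
    by_cases hl : l = k
    · left; rw [← hl]; exact h1
    · right
      intro x hx
      simp only [Zb.pd hd hz hl x hx, mul_zero]
  have e1 := ibp_prod (hv.pd2 i j) (hv.pd l) l b1
  have e2 := ibp_prod (hv.pd2 j l) (hv.pd l) i b2
  have e3 : ∀ x, pd l (pd2 i j v) x = pd i (pd2 j l v) x := by
    intro x
    have : pd l (pd i (pd j v)) x = pd i (pd l (pd j v)) x := pd_comm (hv.pd j).smooth l i x
    show pd l (pd i (pd j v)) x = _
    rw [this, comm j l]
    rfl
  simp only [e3] at e1
  have e4 : ∫ x in HS k, pd2 i l v x * pd2 j l v x = ∫ x in HS k, pd2 j l v x * pd i (pd l v) x := by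
    simp only [mul_comm]; rfl
  rw [e4, e2, ← e1]
  rfl

lemma main_id {k : Fin n} {c : Euc n} {r' : ℝ} {v : Euc n → ℝ} (hv : Gd k c r' v)
    (hz : Zb k v) (hw : Zb k (lap v)) (A : Matrix (Fin n) (Fin n) ℝ) (ε : ℝ) :
    ∫ x in HS k, (ε * lap (lap v) x - ∑ i, ∑ j, A i j * pd2 i j v x) * (- lap v x) =
      ε * (∑ i, ∫ x in HS k, pd i (lap v) x * pd i (lap v) x) +
      ∫ x in HS k, ∑ l, ∑ i, ∑ j, A i j * (pd2 i l v x * pd2 j l v x) := by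
  have hG : ∫ x in HS k, lap v x * lap (lap v) x =
      - ∑ i, ∫ x in HS k, pd i (lap v) x * pd i (lap v) x := by
    have : ∀ x, lap v x * lap (lap v) x = ∑ i, lap v x * pd i (pd i (lap v)) x := by
      intro x
      rw [← Finset.mul_sum]; rfl
    simp only [this]
    rw [integral_finsetSum _ fun i _ => (hv.lap.mul ((hv.lap.pd i).pd i)).integrableOn,
      ← Finset.sum_neg_distrib]
    refine Finset.sum_congr rfl fun i _ => ?_
    exact ibp_prod hv.lap (hv.lap.pd i) i (Or.inr fun x hx => by simp only [hw x hx, zero_mul])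
  have hS : ∫ x in HS k, (∑ i, ∑ j, A i j * pd2 i j v x) * lap v x =
      ∫ x in HS k, ∑ l, ∑ i, ∑ j, A i j * (pd2 i l v x * pd2 j l v x) := by
    have : ∀ x, (∑ i, ∑ j, A i j * pd2 i j v x) * lap v x =
        ∑ l, ∑ i, ∑ j, A i j * (pd2 i j v x * pd2 l l v x) := by
      intro x
      unfold lap
      rw [Finset.mul_sum]
      simp only [Finset.sum_mul, mul_assoc]
    simp only [this]
    have g1 : ∀ i j l, Gd k c r' (fun x => A i j * (pd2 i j v x * pd2 l l v x)) :=
      fun i j l => ((hv.pd2 i j).mul (hv.pd2 l l)).const_mul _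
    have g2 : ∀ i j l, Gd k c r' (fun x => A i j * (pd2 i l v x * pd2 j l v x)) :=
      fun i j l => ((hv.pd2 i l).mul (hv.pd2 j l)).const_mul _
    rw [integral_finsetSum _ fun l _ => (Gd.sum fun i => Gd.sum fun j => g1 i j l).integrableOn,
      integral_finsetSum _ fun l _ => (Gd.sum fun i => Gd.sum fun j => g2 i j l).integrableOn]
    refine Finset.sum_congr rfl fun l _ => ?_
    rw [integral_finsetSum _ fun i _ => (Gd.sum fun j => g1 i j l).integrableOn,
      integral_finsetSum _ fun i _ => (Gd.sum fun j => g2 i j l).integrableOn]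
    refine Finset.sum_congr rfl fun i _ => ?_
    rw [integral_finsetSum _ fun j _ => (g1 i j l).integrableOn,
      integral_finsetSum _ fun j _ => (g2 i j l).integrableOn]
    refine Finset.sum_congr rfl fun j _ => ?_
    rw [integral_const_mul, integral_const_mul, hess_id hv hz]
  rw [← hS]
  have : ∀ x, (ε * lap (lap v) x - ∑ i, ∑ j, A i j * pd2 i j v x) * (- lap v x) =
      (∑ i, ∑ j, A i j * pd2 i j v x) * lap v x - ε * (lap v x * lap (lap v) x) := by
    intro x; ring
  simp only [this]
  rw [integral_sub
    ((Gd.sum fun i => Gd.sum fun j => (hv.pd2 i j).const_mul (A i j)).mul hv.lap).integrableOn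
    ((hv.lap.mul hv.lap.lap).const_mul ε).integrableOn, integral_const_mul, hG]
  ring

/-- odd-reflection boundary estimate on a half ball `B⁺ = B ∩ {x_k > 0}`
(ball centered on the hyperplane `{x_k = 0}`): for `v` vanishing near the curved part
of `∂B⁺` with `v = Δv = 0` on the flat part,
`√ε‖∇Δv‖_{L²(B⁺)} + √λ‖D²v‖_{L²(B⁺)} ≤ C‖L₀^ε v‖_{L²(B⁺)}`, `C` independent of `ε`. -/
theorem stmt19 (n : ℕ) (k : Fin n) (c : Euc n) (hc : c k = 0)
    (r : ℝ) (hr : 0 < r)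
    (A : Matrix (Fin n) (Fin n) ℝ) (hA : A.IsSymm)
    (lam : ℝ) (hlam : 0 < lam)
    (hell : ∀ ξ : Euc n, lam * ‖ξ‖ ^ 2 ≤ ∑ i, ∑ j, A i j * ξ i * ξ j) :
    ∃ C > 0, ∀ ε : ℝ, 0 < ε →
      ∀ v : Euc n → ℝ, ContDiff ℝ (⊤ : ℕ∞) v →
      (∃ r' : ℝ, r' < r ∧ 0 < r' ∧
        ∀ x : Euc n, v x ≠ 0 → 0 ≤ x k → x ∈ Metric.closedBall c r') →
      (∀ x : Euc n, x k = 0 → x ∈ Metric.ball c r → v x = 0 ∧ lap v x = 0) →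
      Real.sqrt ε *
          Real.sqrt (gradL2sq (Metric.ball c r ∩ {x : Euc n | 0 < x k}) (lap v)) +
        Real.sqrt lam *
          Real.sqrt (hessL2sq (Metric.ball c r ∩ {x : Euc n | 0 < x k}) v) ≤
      C * L2norm (Metric.ball c r ∩ {x : Euc n | 0 < x k})
        (fun x => ε * lap (lap v) x - ∑ i, ∑ j, A i j * pd2 i j v x) := by
  have hn : (0 : ℝ) < n := by
    have : 0 < n := lt_of_le_of_lt (Nat.zero_le _) k.2
    exact_mod_cast this
  refine ⟨2 * Real.sqrt (n / lam), by positivity, ?_⟩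
  rintro ε hε v hv ⟨r', hr', _, hsupp⟩ hbd
  have gv : Gd k c r' v := ⟨hv, fun x hx hb => by
    by_contra h0
    exact hb (hsupp x h0 hx)⟩
  have bd : ∀ f : Euc n → ℝ, Gd k c r' f →
      (∀ x : Euc n, x k = 0 → x ∈ Metric.ball c r → f x = 0) → Zb k f := by
    intro f hf h x hx
    by_cases hb : x ∈ Metric.ball c r
    · exact h x hx hb
    · exact hf.van x hx.ge fun h' => hb (Metric.closedBall_subset_ball hr' h')
  have hz : Zb k v := bd v gv fun x hx hb => (hbd x hx hb).1
  have hw : Zb k (lap v) := bd _ gv.lap fun x hx hb => (hbd x hx hb).2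
  set F : Euc n → ℝ := fun x => ε * lap (lap v) x - ∑ i, ∑ j, A i j * pd2 i j v x with hF
  have gF : Gd k c r' F :=
    (gv.lap.lap.const_mul ε).sub (Gd.sum fun i => Gd.sum fun j => (gv.pd2 i j).const_mul (A i j))
  have gq : ∀ l i, Gd k c r' (fun x => pd2 i l v x * pd2 i l v x) :=
    fun l i => (gv.pd2 i l).mul (gv.pd2 i l)
  have hid := main_id gv hz hw A ε
  have hgrad : gradL2sq (Metric.ball c r ∩ {x : Euc n | 0 < x k}) (lap v) =
      ∑ i, ∫ x in HS k, pd i (lap v) x * pd i (lap v) x :=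
    Finset.sum_congr rfl fun i _ => (gv.lap.pd i).L2sq_eq hr'
  have hhess : hessL2sq (Metric.ball c r ∩ {x : Euc n | 0 < x k}) v =
      ∫ x in HS k, ∑ l, ∑ i, pd2 i l v x * pd2 i l v x := by
    rw [integral_finsetSum _ fun l _ => (Gd.sum fun i => gq l i).integrableOn]
    unfold hessL2sq
    rw [Finset.sum_comm]
    refine Finset.sum_congr rfl fun l _ => ?_
    rw [integral_finsetSum _ fun i _ => (gq l i).integrableOn]
    exact Finset.sum_congr rfl fun i _ => (gv.pd2 i l).L2sq_eq hr'
  have hFn : L2sq (Metric.ball c r ∩ {x : Euc n | 0 < x k}) F = ∫ x in HS k, F x * F x :=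
    gF.L2sq_eq hr'
  rw [← hgrad] at hid
  have gQ : Gd k c r' (fun x => ∑ l, ∑ i, pd2 i l v x * pd2 i l v x) :=
    Gd.sum fun l => Gd.sum fun i => gq l i
  have low : lam * hessL2sq (Metric.ball c r ∩ {x : Euc n | 0 < x k}) v ≤
      ∫ x in HS k, ∑ l, ∑ i, ∑ j, A i j * (pd2 i l v x * pd2 j l v x) := by
    rw [hhess, ← integral_const_mul]
    refine integral_mono (gQ.const_mul lam).integrableOn
      (Gd.sum fun l => Gd.sum fun i => Gd.sum fun j =>
        ((gv.pd2 i l).mul (gv.pd2 j l)).const_mul (A i j)).integrableOn ?_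
    intro x
    simp only
    rw [Finset.mul_sum]
    refine Finset.sum_le_sum fun l _ => ?_
    have := hell (WithLp.toLp 2 fun i => pd2 i l v x)
    rw [EuclideanSpace.norm_sq_eq] at this
    simpa [mul_assoc, pow_two] using this
  have up : ∫ x in HS k, F x * (- lap v x) ≤
      (n / (2 * lam)) * L2sq (Metric.ball c r ∩ {x : Euc n | 0 < x k}) F +
      lam / 2 * hessL2sq (Metric.ball c r ∩ {x : Euc n | 0 < x k}) v := by
    rw [hhess, hFn, ← integral_const_mul, ← integral_const_mul,
      ← integral_add ((gF.mul gF).const_mul _).integrableOn (gQ.const_mul _).integrableOn]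
    have gl : Gd k c r' (fun x => F x * (- lap v x)) := by
      have := (gF.mul gv.lap).const_mul (-1)
      convert this using 2
      ring
    refine integral_mono gl.integrableOn
      (((gF.mul gF).const_mul _).add (gQ.const_mul _)).integrableOn ?_
    intro x
    simp only
    have h1 : (lap v x) ^ 2 ≤ n * ∑ l, pd2 l l v x * pd2 l l v x := by
      have := sq_sum_le_card_mul_sum_sq (s := Finset.univ) (f := fun l => pd2 l l v x)
      simpa [lap, pow_two] using this
    have h2 : ∑ l, pd2 l l v x * pd2 l l v x ≤ ∑ l, ∑ i, pd2 i l v x * pd2 i l v x := by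
      refine Finset.sum_le_sum fun l _ => ?_
      exact Finset.single_le_sum (f := fun i => pd2 i l v x * pd2 i l v x)
        (fun i _ => mul_self_nonneg _) (Finset.mem_univ l)
    set Q := ∑ l, ∑ i, pd2 i l v x * pd2 i l v x
    have h3 : (lap v x) ^ 2 ≤ n * Q := h1.trans (by gcongr)
    have h4 : F x * (- lap v x) ≤ n / (2 * lam) * (F x * F x) + lam / (2 * n) * (lap v x) ^ 2 := by
      have : n / (2 * lam) * (F x * F x) + lam / (2 * n) * (lap v x) ^ 2 - F x * (- lap v x) =
          (n * F x + lam * lap v x) ^ 2 / (2 * lam * n) := by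
        field_simp
        ring
      have h5 : 0 ≤ (n * F x + lam * lap v x) ^ 2 / (2 * lam * n) := by positivity
      linarith
    have h6 : lam / (2 * n) * (lap v x) ^ 2 ≤ lam / (2 * n) * (n * Q) := by gcongr
    have h7 : lam / (2 * n) * (n * Q) = lam / 2 * Q := by field_simp
    linarith
  rw [hid] at up
  have hG0 : 0 ≤ gradL2sq (Metric.ball c r ∩ {x : Euc n | 0 < x k}) (lap v) :=
    Finset.sum_nonneg fun i _ => integral_nonneg fun x => sq_nonneg _
  have hH0 : 0 ≤ hessL2sq (Metric.ball c r ∩ {x : Euc n | 0 < x k}) v :=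
    Finset.sum_nonneg fun i _ => Finset.sum_nonneg fun j _ => integral_nonneg fun x => sq_nonneg _
  have hF0 : 0 ≤ L2sq (Metric.ball c r ∩ {x : Euc n | 0 < x k}) F :=
    integral_nonneg fun x => sq_nonneg _
  unfold L2norm
  generalize gradL2sq (Metric.ball c r ∩ {x : Euc n | 0 < x k}) (lap v) = G at *
  generalize hessL2sq (Metric.ball c r ∩ {x : Euc n | 0 < x k}) v = H at *
  generalize L2sq (Metric.ball c r ∩ {x : Euc n | 0 < x k}) F = N at *
  have hc2 : (n : ℝ) / (2 * lam) * N = (n / lam * N) / 2 := by field_simp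
  have hnN : 0 ≤ n / lam * N := by positivity
  have hεG : 0 ≤ ε * G := by positivity
  have hlH : 0 ≤ lam * H := by positivity
  have a1 : Real.sqrt ε * Real.sqrt G ≤ Real.sqrt (n / lam) * Real.sqrt N := by
    rw [← Real.sqrt_mul hε.le, ← Real.sqrt_mul (by positivity)]
    apply Real.sqrt_le_sqrt
    linarith
  have a2 : Real.sqrt lam * Real.sqrt H ≤ Real.sqrt (n / lam) * Real.sqrt N := by
    rw [← Real.sqrt_mul hlam.le, ← Real.sqrt_mul (by positivity)]
    apply Real.sqrt_le_sqrt
    linarith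
  linarith
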